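/- Let v : ℝ → ℝ → ℝ be a smooth function of (x,t) with v_x(x,t) > 0 for all (x,t), satisfying the potential Calogero-Degasperis-Ibragimov-Shabat equation v_t = v_{xxx} - (3/4)·v_{xx}²/v_x + 3v_xv_{xx} + v_x³. Then u := v_x^{1/2} satisfies the Calogero-Degasperis-Ibragimov-Shabat equation u_t = u_{xxx} + 3u²u_{xx} + 9uu_x² + 3u⁴u_x. -/

import Mathlib

/-!
Put `u = v_x ^ (1/2)`, a positive smooth function with `v_x = u²`. In terms of `u` the potential
equation becomes polynomial,
`v_t = 2 u u_xx - u_x² + 6 u³ u_x + u⁶`,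
because `v_xx² / v_x = 4 u_x²`. Differentiating in `x` and using `v_tx = v_xt = 2 u u_t`
(`Smooth2.dt_dx`) gives `2 u` times the CDIS equation, and `u ≠ 0` may be cancelled.
-/

/-- Total `x`-derivative of a function of `(x, t)`. -/
noncomputable def dx (f : ℝ → ℝ → ℝ) : ℝ → ℝ → ℝ := fun x t => deriv (fun y => f y t) x

/-- Total `t`-derivative of a function of `(x, t)`. -/
noncomputable def dt (f : ℝ → ℝ → ℝ) : ℝ → ℝ → ℝ := fun x t => deriv (fun s => f x s) t

/-- The potential Calogero-Degasperis-Ibragimov-Shabat equation. -/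
def PotCDIS (v : ℝ → ℝ → ℝ) : Prop :=
  ∀ x t, dt v x t =
    dx (dx (dx v)) x t - (3/4) * (dx (dx v) x t)^2 / dx v x t
    + 3 * dx v x t * dx (dx v) x t + (dx v x t)^3

/-- The Calogero-Degasperis-Ibragimov-Shabat equation. -/
def CDIS (u : ℝ → ℝ → ℝ) : Prop :=
  ∀ x t, dt u x t =
    dx (dx (dx u)) x t + 3 * (u x t)^2 * dx (dx u) x t
    + 9 * u x t * (dx u x t)^2 + 3 * (u x t)^4 * dx u x t

open scoped ContDiff

/-- Joint smoothness of a curried function of `(x, t)`. -/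
def Smooth2 (f : ℝ → ℝ → ℝ) : Prop := ContDiff ℝ ∞ (fun p : ℝ × ℝ => f p.1 p.2)

namespace Smooth2

variable {f : ℝ → ℝ → ℝ}

lemma hasDerivAt_x (hf : Smooth2 f) (x t : ℝ) :
    HasDerivAt (fun y => f y t) (fderiv ℝ (fun p : ℝ × ℝ => f p.1 p.2) (x, t) (1, 0)) x := by
  have h := (hf.differentiable (by simp) (x, t)).hasFDerivAt
  exact h.comp_hasDerivAt x ((hasDerivAt_id x).prodMk (hasDerivAt_const x t))

lemma hasDerivAt_t (hf : Smooth2 f) (x t : ℝ) :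
    HasDerivAt (fun s => f x s) (fderiv ℝ (fun p : ℝ × ℝ => f p.1 p.2) (x, t) (0, 1)) t := by
  have h := (hf.differentiable (by simp) (x, t)).hasFDerivAt
  exact h.comp_hasDerivAt t ((hasDerivAt_const t x).prodMk (hasDerivAt_id t))

lemma dx_eq (hf : Smooth2 f) (x t : ℝ) :
    dx f x t = fderiv ℝ (fun p : ℝ × ℝ => f p.1 p.2) (x, t) (1, 0) :=
  (hf.hasDerivAt_x x t).deriv

lemma dt_eq (hf : Smooth2 f) (x t : ℝ) :
    dt f x t = fderiv ℝ (fun p : ℝ × ℝ => f p.1 p.2) (x, t) (0, 1) :=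
  (hf.hasDerivAt_t x t).deriv

lemma hasDerivAt_dx (hf : Smooth2 f) (x t : ℝ) :
    HasDerivAt (fun y => f y t) (dx f x t) x :=
  hf.dx_eq x t ▸ hf.hasDerivAt_x x t

lemma hasDerivAt_dt (hf : Smooth2 f) (x t : ℝ) :
    HasDerivAt (fun s => f x s) (dt f x t) t :=
  hf.dt_eq x t ▸ hf.hasDerivAt_t x t

lemma fderiv_contDiff (hf : Smooth2 f) :
    ContDiff ℝ ∞ (fderiv ℝ (fun p : ℝ × ℝ => f p.1 p.2)) :=
  ContDiff.fderiv_right hf (by simp)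

lemma dx (hf : Smooth2 f) : Smooth2 (dx f) := by
  have h : (fun p : ℝ × ℝ => _root_.dx f p.1 p.2) =
      fun p => fderiv ℝ (fun p : ℝ × ℝ => f p.1 p.2) p (1, 0) :=
    funext fun p => hf.dx_eq p.1 p.2
  unfold Smooth2
  rw [h]
  exact hf.fderiv_contDiff.clm_apply contDiff_const

/-- Mixed partial derivatives commute, by symmetry of the second Fréchet derivative. -/
lemma dt_dx (hf : Smooth2 f) (x t : ℝ) : dt (_root_.dx f) x t = _root_.dx (dt f) x t := by
  have hD := (hf.fderiv_contDiff.differentiable (by simp) (x, t)).hasFDerivAt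
  have h₁ : HasDerivAt (fun s => fderiv ℝ (fun p : ℝ × ℝ => f p.1 p.2) (x, s) (1, 0))
      (fderiv ℝ (fderiv ℝ (fun p : ℝ × ℝ => f p.1 p.2)) (x, t) (0, 1) (1, 0)) t := by
    have h := hD.comp_hasDerivAt t ((hasDerivAt_const t x).prodMk (hasDerivAt_id t))
    simpa using h.clm_apply (hasDerivAt_const t ((1, 0) : ℝ × ℝ))
  have h₂ : HasDerivAt (fun y => fderiv ℝ (fun p : ℝ × ℝ => f p.1 p.2) (y, t) (0, 1))
      (fderiv ℝ (fderiv ℝ (fun p : ℝ × ℝ => f p.1 p.2)) (x, t) (1, 0) (0, 1)) x := by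
    have h := hD.comp_hasDerivAt x ((hasDerivAt_id x).prodMk (hasDerivAt_const x t))
    simpa using h.clm_apply (hasDerivAt_const x ((0, 1) : ℝ × ℝ))
  have hsymm : IsSymmSndFDerivAt ℝ (fun p : ℝ × ℝ => f p.1 p.2) (x, t) :=
    (ContDiff.contDiffAt hf).isSymmSndFDerivAt (by
      rw [minSmoothness_of_isRCLikeNormedField]
      exact WithTop.coe_le_coe.2 le_top)
  have e₁ : (fun s => _root_.dx f x s) = fun s =>
      fderiv ℝ (fun p : ℝ × ℝ => f p.1 p.2) (x, s) (1, 0) :=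
    funext fun s => hf.dx_eq x s
  have e₂ : (fun y => dt f y t) = fun y =>
      fderiv ℝ (fun p : ℝ × ℝ => f p.1 p.2) (y, t) (0, 1) :=
    funext fun y => hf.dt_eq y t
  change deriv (fun s => _root_.dx f x s) t = deriv (fun y => dt f y t) x
  rw [e₁, e₂, h₁.deriv, h₂.deriv]
  exact hsymm.eq _ _

end Smooth2

/-- If `v` solves the potential CDIS equation with `v_x > 0`, then `u = v_x^{1/2}`
solves the CDIS equation. -/
theorem potential_cdis_to_cdis
    (v : ℝ → ℝ → ℝ)
    (hv : ContDiff ℝ (⊤ : ℕ∞) (fun p : ℝ × ℝ => v p.1 p.2))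
    (hvx : ∀ x t, 0 < dx v x t)
    (heq : PotCDIS v) :
    CDIS (fun x t => (dx v x t) ^ ((1/2) : ℝ)) := by
  have hV : Smooth2 v := hv
  obtain ⟨u, hu⟩ : ∃ u : ℝ → ℝ → ℝ, u = fun x t => (dx v x t) ^ ((1/2) : ℝ) := ⟨_, rfl⟩
  rw [← hu]
  have hpos : ∀ x t, 0 < u x t := fun x t => by
    rw [hu]; exact Real.rpow_pos_of_pos (hvx x t) _
  have hsm : Smooth2 u := by
    rw [hu]
    exact ContDiff.rpow_const_of_ne hV.dx fun p => (hvx p.1 p.2).ne'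
  have hsq : dx v = fun x t => u x t ^ 2 := by
    funext x t
    rw [hu]
    change _ = ((dx v x t) ^ ((1/2) : ℝ)) ^ 2
    rw [← Real.sqrt_eq_rpow, Real.sq_sqrt (hvx x t).le]
  have hsq₂ : dx (dx v) = fun x t => 2 * u x t * dx u x t := by
    funext x t
    rw [hsq]
    refine (((hsm.hasDerivAt_dx x t).pow 2).congr_deriv ?_).deriv
    norm_num
  have hsq₃ : dx (dx (dx v)) = fun x t => 2 * dx u x t ^ 2 + 2 * u x t * dx (dx u) x t := by
    funext x t
    rw [hsq₂]
    refine ((((hsm.hasDerivAt_dx x t).const_mul 2).mul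
      (hsm.dx.hasDerivAt_dx x t)).congr_deriv ?_).deriv
    ring
  have hvt : dt v = fun x t => 2 * u x t * dx (dx u) x t - dx u x t ^ 2
      + 6 * u x t ^ 3 * dx u x t + u x t ^ 6 := by
    funext x t
    have hne := (hpos x t).ne'
    rw [heq x t, hsq₃, hsq₂, hsq]
    field_simp
    ring
  intro x t
  have h₀ := hsm.hasDerivAt_dx x t
  have h₁ := hsm.dx.hasDerivAt_dx x t
  have h₂ := hsm.dx.dx.hasDerivAt_dx x t
  have hR := ((((h₀.const_mul 2).mul h₂).sub (h₁.pow 2)).add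
    (((h₀.pow 3).const_mul 6).mul h₁)).add (h₀.pow 6)
  have hL := (hsm.hasDerivAt_dt x t).pow 2
  have hmix := hV.dt_dx x t
  rw [hvt, hsq] at hmix
  -- `v_xt = v_tx` written out in terms of `u`: this is `2 u` times the CDIS equation.
  have key := (hL.deriv.symm.trans hmix).trans hR.deriv
  refine mul_left_cancel₀ (mul_ne_zero two_ne_zero (hpos x t).ne') ?_
  norm_num at key
  linear_combination key
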